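/- (Taylor's Gevrey criterion.) Let X be a complex Banach space and let S : [0, ∞) → B(X) be a strongly continuous semigroup (S(0) = I, S(t+s) = S(t)S(s), and t ↦ S(t)x is continuous for every x ∈ X) satisfying ‖S(t)‖ ≤ M e^(ωt) for all t ≥ 0. Let A be its infinitesimal generator, i.e., the linear operator with domain D(A) = {x ∈ X : the limit lim_{h→0⁺} (S(h)x − x)/h exists} and Ax equal to that limit. Suppose that for some μ ≥ ω and α ∈ (0, 1], every λ = μ + iβ with β real lies in the resolvent set of A and limsup_{|β|→∞} |β|^α · ‖R(μ + iβ; A)‖ = C < ∞, where R(λ; A) = (λI − A)⁻¹ ∈ B(X). Then for every δ > 1/α, the semigroup S(t) is of Gevrey class δ for t > 0. -/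

import Mathlib

/-- A strongly continuous semigroup `S` (as an operator-valued function of time) is of
Gevrey class `δ` for `t > t₀`: `S` is infinitely differentiable in operator norm on
`(t₀, ∞)` and on every compact `K ⊆ (t₀, ∞)`, for every `θ > 0` there is `C > 0` with
`‖S⁽ⁿ⁾(t)‖ ≤ C θⁿ (n!)^δ` for all `t ∈ K` and all `n`. -/
def IsGevreyClass {X : Type*} [NormedAddCommGroup X] [NormedSpace ℂ X]
    (S : ℝ → X →L[ℂ] X) (δ : ℝ) (t₀ : ℝ) : Prop :=
  ContDiffOn ℝ (⊤ : ℕ∞) S (Set.Ioi t₀) ∧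
  ∀ K : Set ℝ, K ⊆ Set.Ioi t₀ → IsCompact K → ∀ θ : ℝ, 0 < θ →
    ∃ C > 0, ∀ t ∈ K, ∀ n : ℕ,
      ‖iteratedDerivWithin n S (Set.Ioi t₀) t‖ ≤ C * θ ^ n * (n.factorial : ℝ) ^ δ

/-!
For `ω < re z` the powers of the resolvent `R(z)` of the generator are Laplace transforms:
`n! R(z) ^ (n + 1) = ∫₀^∞ tⁿ e^{-zt} S(t) dt`. The resolvent identity moves the decay `|β| ^ (-α)`
of the resolvent from the line `re z = μ` to a line `re z = σ` with `ω < σ`, where the Fourier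
transform of `e^{-σt} tⁿ S(t)`, extended by zero to `t ≤ 0`, therefore decays like
`|ξ| ^ (-α (n + 1))`. If `m + 1 < α (n + 1)`, Fourier inversion makes this extension of `tⁿ S(t)`
of class `Cᵐ` in operator norm on all of `ℝ`, and since it vanishes for `t ≤ 0`, Taylor's formula
gives `‖S⁽ᵐ⁾(t)‖ = O(t⁻ⁿ)` as `t → 0`. Finally `S⁽ᵐᵏ⁾(t) = S⁽ᵐ⁾(t / k) ^ k` is of order
`k ^ (nk)`, that is, of order `((mk)!) ^ (n / m)` up to a geometric factor, and `n / m` can be taken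
below any `δ > 1 / α` by choosing `m` large.
-/

open Asymptotics Filter MeasureTheory Set Topology
open scoped FourierTransform

section VanishingOnHalfLine

variable {E : Type*} [NormedAddCommGroup E] [NormedSpace ℝ E]

lemma iteratedDeriv_zero_eq_zero_of_eqOn_Iic {U : ℝ → E} {m : ℕ} (hU : ContDiff ℝ m U)
    (h0 : EqOn U 0 (Iic 0)) {j : ℕ} (hj : j ≤ m) : iteratedDeriv j U 0 = 0 := by
  have hneg : EqOn (iteratedDeriv j U) 0 (Iio 0) := fun t ht => by
    simpa using (h0.mono Iio_subset_Iic_self).iteratedDeriv_of_isOpen isOpen_Iio j ht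
  have hcl := hneg.closure (hU.continuous_iteratedDeriv j (by exact_mod_cast hj)) continuous_zero
  rw [closure_Iio] at hcl
  exact hcl self_mem_Iic

lemma exists_norm_iteratedDeriv_le_mul_pow_of_eqOn_Iic {U : ℝ → E} {m : ℕ}
    (hU : ContDiff ℝ m U) (h0 : EqOn U 0 (Iic 0)) (b : ℝ) :
    ∃ D, ∀ i j : ℕ, i + j = m → ∀ t ∈ Icc 0 b, ‖iteratedDeriv j U t‖ ≤ D * t ^ i := by
  obtain ⟨D, hD⟩ := isCompact_Icc.exists_bound_of_continuousOn (s := Icc 0 b)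
    (hU.continuous_iteratedDeriv m le_rfl).continuousOn
  refine ⟨D, fun i => ?_⟩
  induction i with
  | zero =>
    intro j hj t ht
    obtain rfl : j = m := by omega
    simpa using hD t ht
  | succ i ih =>
    intro j hj t ht
    have hderiv (s : ℝ) : HasDerivAt (iteratedDeriv j U) (iteratedDeriv (j + 1) U s) s := by
      rw [iteratedDeriv_succ]
      exact (hU.differentiable_iteratedDeriv j (by exact_mod_cast (by omega)) s).hasDerivAt
    have hD0 : 0 ≤ D := (norm_nonneg _).trans (hD t ht)
    have hbound : ∀ s ∈ Ico 0 t, ‖iteratedDeriv (j + 1) U s‖ ≤ D * t ^ i := fun s hs => by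
      have hs0 : 0 ≤ s := hs.1
      calc ‖iteratedDeriv (j + 1) U s‖ ≤ D * s ^ i :=
            ih (j + 1) (by omega) s ⟨hs0, hs.2.le.trans ht.2⟩
        _ ≤ D * t ^ i := by gcongr; exact hs.2.le
    have hmean := norm_image_sub_le_of_norm_deriv_le_segment'
      (fun s _ => (hderiv s).hasDerivWithinAt) hbound t ⟨ht.1, le_rfl⟩
    rwa [iteratedDeriv_zero_eq_zero_of_eqOn_Iic hU h0 (by omega), sub_zero, sub_zero,
      mul_assoc, ← pow_succ] at hmean

lemma contDiffOn_zpow_Ioi (k : ℤ) (n : WithTop ℕ∞) : ContDiffOn ℝ n (fun t : ℝ => t ^ k) (Ioi 0) :=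
  fun _ ht => (analyticAt_id.zpow (ne_of_gt ht)).contDiffAt.contDiffWithinAt

lemma eqOn_zpow_neg_smul_indicator_pow_smul (n : ℕ) (f : ℝ → E) :
    EqOn f ((fun t : ℝ => t ^ (-(n : ℤ))) • (Ioi 0).indicator fun t => t ^ n • f t) (Ioi 0) := by
  intro t ht
  have hn : t ^ n ≠ 0 := pow_ne_zero _ (ne_of_gt ht)
  simp [indicator_of_mem ht, smul_smul, hn]

lemma contDiffOn_of_indicator_pow_smul {f : ℝ → E} {m n : ℕ}
    (hf : ContDiff ℝ m ((Ioi 0).indicator fun t => t ^ n • f t)) : ContDiffOn ℝ m f (Ioi 0) :=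
  ((contDiffOn_zpow_Ioi _ _).smul hf.contDiffOn).congr
    (eqOn_zpow_neg_smul_indicator_pow_smul n f)

/- Leibniz' rule for `f t = t⁻ⁿ • U t`: since `U` vanishes on the negative half-line, Taylor's
formula gives `U⁽ʲ⁾(t) = O(t ^ (m - j))`, which makes every summand `O(t⁻ⁿ)`. -/
lemma exists_norm_iteratedDeriv_le_inv_pow {f : ℝ → E} {m n : ℕ}
    (hf : ContDiff ℝ m ((Ioi 0).indicator fun t => t ^ n • f t)) (b : ℝ) :
    ∃ C, ∀ t ∈ Ioc 0 b, ‖iteratedDeriv m f t‖ ≤ C * (t ^ n)⁻¹ := by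
  set U := (Ioi 0).indicator fun t => t ^ n • f t
  have hU0 : EqOn U 0 (Iic 0) := fun t ht => indicator_of_notMem (notMem_Ioi.2 ht) _
  obtain ⟨D, hD⟩ := exists_norm_iteratedDeriv_le_mul_pow_of_eqOn_Iic hf hU0 b
  let c : ℕ → ℝ := fun i => ∏ l ∈ Finset.range i, (((-n : ℤ) : ℝ) - l)
  refine ⟨∑ i ∈ Finset.range (m + 1), m.choose i * |c i| * D, fun t ht => ?_⟩
  have ht0 : t ≠ 0 := ht.1.ne'
  have hleibniz : iteratedDeriv m f t = ∑ i ∈ Finset.range (m + 1),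
      m.choose i • (c i * t ^ (-n - i : ℤ)) • iteratedDeriv (m - i) U t := by
    have htm : t ∈ Ioi 0 := ht.1
    rw [← iteratedDerivWithin_of_isOpen isOpen_Ioi htm,
      iteratedDerivWithin_congr (eqOn_zpow_neg_smul_indicator_pow_smul n f) htm,
      iteratedDerivWithin_smul htm (uniqueDiffOn_Ioi 0) (contDiffOn_zpow_Ioi _ _ t htm)
        hf.contDiffAt.contDiffWithinAt]
    simp only [iteratedDerivWithin_of_isOpen isOpen_Ioi htm, iteratedDeriv_eq_iterate,
      iter_deriv_zpow, c, U]
  rw [hleibniz, Finset.sum_mul]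
  refine norm_sum_le_of_le _ fun i hi => ?_
  have hi : i + (m - i) = m := by grind
  calc ‖m.choose i • (c i * t ^ (-n - i : ℤ)) • iteratedDeriv (m - i) U t‖
      = m.choose i * |c i| * t ^ (-n - i : ℤ) * ‖iteratedDeriv (m - i) U t‖ := by
        rw [← Nat.cast_smul_eq_nsmul ℝ, norm_smul, norm_smul, norm_mul, Real.norm_natCast,
          Real.norm_eq_abs, Real.norm_of_nonneg (zpow_pos ht.1 _).le]
        ring
    _ ≤ m.choose i * |c i| * t ^ (-n - i : ℤ) * (D * t ^ i) := by
        have := zpow_pos ht.1 (-n - i)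
        gcongr
        exact hD i (m - i) hi t ⟨ht.1.le, ht.2⟩
    _ = m.choose i * |c i| * D * (t ^ n)⁻¹ := by
        rw [zpow_sub₀ ht0, zpow_neg, zpow_natCast, zpow_natCast]
        field_simp

end VanishingOnHalfLine

section GevreyEstimate

lemma factorial_pow_le_factorial_mul (k m : ℕ) : k.factorial ^ m ≤ (m * k).factorial := by
  have hdvd := Nat.prod_factorial_dvd_factorial_sum (Finset.range m) fun _ => k
  simp only [Finset.prod_const, Finset.sum_const, Finset.card_range, smul_eq_mul] at hdvd
  exact Nat.le_of_dvd (Nat.factorial_pos _) hdvd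

lemma factorial_pow_le_factorial_rpow_div {k j m : ℕ} (hm : m ≠ 0) (hkj : m * k ≤ j) (n : ℕ) :
    (k.factorial : ℝ) ^ n ≤ (j.factorial : ℝ) ^ (n / m : ℝ) := by
  have hpow : (k.factorial : ℝ) ^ m ≤ j.factorial := by
    exact_mod_cast (factorial_pow_le_factorial_mul k m).trans (Nat.factorial_le hkj)
  calc (k.factorial : ℝ) ^ n = ((k.factorial : ℝ) ^ m) ^ (n / m : ℝ) := by
        rw [← Real.rpow_natCast_mul (by positivity), mul_div_cancel₀ _ (by positivity),
          Real.rpow_natCast]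
    _ ≤ (j.factorial : ℝ) ^ (n / m : ℝ) := by gcongr

lemma exists_pow_mul_factorial_rpow_le {F p δ θ : ℝ} (hF : 0 ≤ F) (hp : p < δ) (hθ : 0 < θ) :
    ∃ C > 0, ∀ j : ℕ,
      F ^ j * (j.factorial : ℝ) ^ p ≤ C * θ ^ j * (j.factorial : ℝ) ^ δ := by
  have hε : 0 < δ - p := sub_pos.2 hp
  set G := (F / θ) ^ (δ - p)⁻¹
  obtain ⟨B, hB⟩ := (FloorSemiring.tendsto_pow_div_factorial_atTop G).bddAbove_range
  refine ⟨max B 1 ^ (δ - p), by positivity, fun j => ?_⟩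
  have hj : (0 : ℝ) < j.factorial := by positivity
  have hG : G ^ j ≤ max B 1 * j.factorial := by
    rw [← div_le_iff₀ hj]
    exact (hB (mem_range_self j)).trans (le_max_left B 1)
  have hFG : F = θ * G ^ (δ - p) := by
    rw [Real.rpow_inv_rpow (by positivity) hε.ne', mul_div_cancel₀ _ hθ.ne']
  calc F ^ j * (j.factorial : ℝ) ^ p
      = θ ^ j * (G ^ j) ^ (δ - p) * (j.factorial : ℝ) ^ p := by
        rw [hFG, mul_pow, ← Real.rpow_mul_natCast (by positivity), mul_comm (δ - p),
          Real.rpow_natCast_mul (by positivity)]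
    _ ≤ θ ^ j * (max B 1 * j.factorial) ^ (δ - p) * (j.factorial : ℝ) ^ p := by gcongr
    _ = max B 1 ^ (δ - p) * θ ^ j * (j.factorial : ℝ) ^ (δ - p + p) := by
        rw [Real.mul_rpow (by positivity) hj.le, Real.rpow_add hj]
        ring
    _ = max B 1 ^ (δ - p) * θ ^ j * (j.factorial : ℝ) ^ δ := by rw [sub_add_cancel]

lemma exists_mem_Ioc_forall_lt_of_isCompact {K : Set ℝ} {b : ℝ} (hK : IsCompact K)
    (hpos : K ⊆ Ioi 0) (hb : 0 < b) : ∃ a ∈ Ioc 0 b, ∀ t ∈ K, a < t := by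
  rcases K.eq_empty_or_nonempty with rfl | hne
  · exact ⟨b, ⟨hb, le_rfl⟩, by simp⟩
  · obtain ⟨c, hc, hcK⟩ := hK.exists_isLeast hne
    have hc0 : 0 < c := hpos hc
    refine ⟨min (c / 2) b, ⟨by positivity, min_le_right _ _⟩, fun t ht => ?_⟩
    calc min (c / 2) b ≤ c / 2 := min_le_left _ _
      _ < c := half_lt_self hc0
      _ ≤ t := hcK ht

lemma exists_norm_iteratedDeriv_le_of_isCompact {E : Type*} [NormedAddCommGroup E]
    [NormedSpace ℝ E] {f : ℝ → E} (hf : ContDiffOn ℝ (⊤ : ℕ∞) f (Ioi 0)) {K : Set ℝ}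
    (hK : IsCompact K) (hpos : K ⊆ Ioi 0) (m : ℕ) :
    ∃ B, ∀ j < m, ∀ t ∈ K, ‖iteratedDeriv j f t‖ ≤ B := by
  have hcont (j : ℕ) : ContinuousOn (iteratedDeriv j f) (Ioi 0) :=
    (hf.continuousOn_iteratedDerivWithin (by exact_mod_cast le_top) (uniqueDiffOn_Ioi 0)).congr
      fun _ ht => (iteratedDerivWithin_of_isOpen isOpen_Ioi ht).symm
  obtain ⟨B, hB⟩ := hK.bddAbove_image (f := fun t => ∑ j ∈ Finset.range m, ‖iteratedDeriv j f t‖)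
    (continuousOn_finsetSum _ fun j _ => ((hcont j).mono hpos).norm)
  refine ⟨B, fun j hj t ht => ?_⟩
  calc ‖iteratedDeriv j f t‖ ≤ ∑ j ∈ Finset.range m, ‖iteratedDeriv j f t‖ :=
        Finset.single_le_sum (f := fun j => ‖iteratedDeriv j f t‖)
          (fun _ _ => norm_nonneg _) (Finset.mem_range.2 hj)
    _ ≤ B := hB (mem_image_of_mem _ ht)

variable {𝔸 : Type*} [NormedRing 𝔸] [NormedAlgebra ℝ 𝔸] {f : ℝ → 𝔸}

lemma iteratedDeriv_add_of_map_add_eq_mul (hf : ContDiffOn ℝ (⊤ : ℕ∞) f (Ioi 0))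
    (hadd : ∀ t s, 0 < t → 0 < s → f (t + s) = f t * f s) (i j : ℕ) {t s : ℝ} (ht : 0 < t)
    (hs : 0 < s) :
    iteratedDeriv (i + j) f (t + s) = iteratedDeriv i f t * iteratedDeriv j f s := by
  have hfat {u : ℝ} (hu : 0 < u) (n : ℕ) : ContDiffAt ℝ n f u :=
    (hf.contDiffAt (Ioi_mem_nhds hu)).of_le (by exact_mod_cast le_top)
  have hleft {u : ℝ} (hu : 0 < u) : iteratedDeriv i f (t + u) = iteratedDeriv i f t * f u := by
    have heq : EqOn (fun v => f (v + u)) (fun v => f v • f u) (Ioi 0) :=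
      fun v hv => hadd v u hv hu
    have := heq.iteratedDeriv_of_isOpen isOpen_Ioi i (mem_Ioi.2 ht)
    rwa [iteratedDeriv_comp_add_const, iteratedDeriv_smul_const (hfat ht i)] at this
  have heq : EqOn (fun u => iteratedDeriv i f (t + u)) (fun u => iteratedDeriv i f t * f u)
      (Ioi 0) := fun u hu => hleft hu
  have := heq.iteratedDeriv_of_isOpen isOpen_Ioi j (mem_Ioi.2 hs)
  rw [iteratedDeriv_comp_const_add, iteratedDeriv_const_mul _ (hfat hs j)] at this
  rw [← this]
  simp only [iteratedDeriv_eq_iterate, ← Function.iterate_add_apply, add_comm]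

lemma norm_iteratedDeriv_mul_succ_le_pow (hf : ContDiffOn ℝ (⊤ : ℕ∞) f (Ioi 0))
    (hadd : ∀ t s, 0 < t → 0 < s → f (t + s) = f t * f s) (m k : ℕ) {t : ℝ} (ht : 0 < t) :
    ‖iteratedDeriv (m * (k + 1)) f ((k + 1) * t)‖ ≤ ‖iteratedDeriv m f t‖ ^ (k + 1) := by
  induction k with
  | zero => simp
  | succ k ih =>
    calc ‖iteratedDeriv (m * (k + 1 + 1)) f (((k + 1 : ℕ) + 1) * t)‖
        = ‖iteratedDeriv (m * (k + 1)) f ((k + 1) * t) * iteratedDeriv m f t‖ := by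
          rw [← iteratedDeriv_add_of_map_add_eq_mul hf hadd _ _ (by positivity) ht,
            Nat.mul_succ m (k + 1), Nat.cast_succ, add_one_mul]
      _ ≤ ‖iteratedDeriv m f t‖ ^ (k + 1) * ‖iteratedDeriv m f t‖ :=
          (norm_mul_le _ _).trans (by gcongr)
      _ = ‖iteratedDeriv m f t‖ ^ (k + 1 + 1) := (pow_succ _ _).symm

lemma norm_iteratedDeriv_mul_succ_le_factorial_pow (hf : ContDiffOn ℝ (⊤ : ℕ∞) f (Ioi 0))
    (hadd : ∀ t s, 0 < t → 0 < s → f (t + s) = f t * f s) {m n : ℕ} {a C : ℝ} (ha : 0 < a)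
    (hC : ∀ t ∈ Ioc 0 a, ‖iteratedDeriv m f t‖ ≤ C * (t ^ n)⁻¹) (k : ℕ) :
    ‖iteratedDeriv (m * (k + 1)) f a‖ ≤
      (C * (a ^ n)⁻¹ * Real.exp n) ^ (k + 1) * ((k + 1).factorial : ℝ) ^ n := by
  set B := C * (a ^ n)⁻¹
  have hB0 : 0 ≤ B := (norm_nonneg _).trans (hC a ⟨ha, le_rfl⟩)
  have hk : (0 : ℝ) < k + 1 := by positivity
  have hstirling : ((k : ℝ) + 1) ^ (k + 1) ≤ Real.exp (k + 1) * (k + 1).factorial := by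
    rw [← div_le_iff₀ (by positivity)]
    exact Real.pow_div_factorial_le_exp _ hk.le _
  have hsmall : ‖iteratedDeriv m f (a / (k + 1))‖ ≤ B * (k + 1) ^ n := by
    have hmem : a / (k + 1) ∈ Ioc 0 a := ⟨by positivity, div_le_self ha.le (by simp)⟩
    refine (hC _ hmem).trans_eq ?_
    simp only [B, div_pow, inv_div]
    ring
  calc ‖iteratedDeriv (m * (k + 1)) f a‖
      ≤ ‖iteratedDeriv m f (a / (k + 1))‖ ^ (k + 1) := by
        simpa only [mul_div_cancel₀ a hk.ne'] using
          norm_iteratedDeriv_mul_succ_le_pow hf hadd m k (div_pos ha hk)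
    _ ≤ (B * (k + 1) ^ n) ^ (k + 1) := by gcongr
    _ = B ^ (k + 1) * (((k : ℝ) + 1) ^ (k + 1)) ^ n := by
        rw [mul_pow, ← pow_mul, ← pow_mul, mul_comm n]
    _ ≤ B ^ (k + 1) * (Real.exp (k + 1) * (k + 1).factorial) ^ n := by gcongr
    _ = (B * Real.exp n) ^ (k + 1) * ((k + 1).factorial : ℝ) ^ n := by
        rw [mul_pow (Real.exp _) _ n, mul_pow B (Real.exp n) (k + 1), ← Real.exp_nat_mul,
          ← Real.exp_nat_mul]
        push_cast
        ring_nf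

lemma exists_norm_iteratedDeriv_mul_le (hf : ContDiffOn ℝ (⊤ : ℕ∞) f (Ioi 0))
    (hadd : ∀ t s, 0 < t → 0 < s → f (t + s) = f t * f s) {m n : ℕ} {a C : ℝ} (ha : 0 < a)
    (hC : ∀ t ∈ Ioc 0 a, ‖iteratedDeriv m f t‖ ≤ C * (t ^ n)⁻¹) :
    ∃ F ≥ 1, ∀ k : ℕ,
      ‖iteratedDeriv (m * k) f a‖ ≤ F ^ (k + 1) * (k.factorial : ℝ) ^ n := by
  set G := C * (a ^ n)⁻¹ * Real.exp n
  have hG0 : 0 ≤ G :=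
    mul_nonneg ((norm_nonneg _).trans (hC a ⟨ha, le_rfl⟩)) (Real.exp_pos _).le
  set F := 1 + ‖f a‖ + G
  have hF1 : 1 ≤ F := by linarith [norm_nonneg (f a)]
  have hfF : ‖f a‖ ≤ F := by linarith
  have hGF : G ≤ F := by linarith [norm_nonneg (f a)]
  refine ⟨F, hF1, fun k => ?_⟩
  rcases k with _ | k
  · simpa using hfF
  calc ‖iteratedDeriv (m * (k + 1)) f a‖ ≤ G ^ (k + 1) * ((k + 1).factorial : ℝ) ^ n :=
        norm_iteratedDeriv_mul_succ_le_factorial_pow hf hadd ha hC k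
    _ ≤ F ^ (k + 1 + 1) * ((k + 1).factorial : ℝ) ^ n := by
        gcongr ?_ * _
        exact (pow_le_pow_left₀ hG0 hGF _).trans (pow_le_pow_right₀ hF1 (Nat.le_succ _))

lemma exists_norm_iteratedDeriv_le_factorial_rpow (hf : ContDiffOn ℝ (⊤ : ℕ∞) f (Ioi 0))
    (hadd : ∀ t s, 0 < t → 0 < s → f (t + s) = f t * f s) {m n : ℕ} {b C δ : ℝ} (hb : 0 < b)
    (hC : ∀ t ∈ Ioc 0 b, ‖iteratedDeriv m f t‖ ≤ C * (t ^ n)⁻¹) (hnm : n < δ * m)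
    {K : Set ℝ} (hK : IsCompact K) (hpos : K ⊆ Ioi 0) {θ : ℝ} (hθ : 0 < θ) :
    ∃ B > 0, ∀ t ∈ K, ∀ j : ℕ,
      ‖iteratedDeriv j f t‖ ≤ B * θ ^ j * (j.factorial : ℝ) ^ δ := by
  have hm : m ≠ 0 := by
    rintro rfl
    rw [Nat.cast_zero, mul_zero] at hnm
    exact hnm.not_ge n.cast_nonneg
  obtain ⟨a, ha, haK⟩ := exists_mem_Ioc_forall_lt_of_isCompact hK hpos hb
  obtain ⟨F, hF, hmk⟩ := exists_norm_iteratedDeriv_mul_le hf hadd ha.1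
    fun t ht => hC t ⟨ht.1, ht.2.trans ha.2⟩
  obtain ⟨B, hB⟩ := exists_norm_iteratedDeriv_le_of_isCompact hf
    (hK.image (continuous_sub_right a)) (image_subset_iff.2 fun t ht => sub_pos.2 (haK t ht)) m
  have hmod {r : ℕ} (hr : r < m) {t : ℝ} (ht : t ∈ K) :
      ‖iteratedDeriv r f (t - a)‖ ≤ max B 1 :=
    (hB r hr _ (mem_image_of_mem _ ht)).trans (le_max_left B 1)
  have hp : (n / m : ℝ) < δ := (div_lt_iff₀ (by positivity)).2 hnm
  obtain ⟨A, hA0, hA⟩ := exists_pow_mul_factorial_rpow_le (by positivity : 0 ≤ F) hp hθ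
  refine ⟨F * A * max B 1, by positivity, fun t ht j => ?_⟩
  calc ‖iteratedDeriv j f t‖
      = ‖iteratedDeriv (m * (j / m)) f a * iteratedDeriv (j % m) f (t - a)‖ := by
        rw [← iteratedDeriv_add_of_map_add_eq_mul hf hadd _ _ ha.1 (sub_pos.2 (haK t ht)),
          Nat.div_add_mod, add_sub_cancel]
    _ ≤ F ^ (j / m + 1) * ((j / m).factorial : ℝ) ^ n * max B 1 := by
        refine (norm_mul_le _ _).trans ?_
        gcongr
        exacts [hmk _, hmod (Nat.mod_lt _ (Nat.pos_of_ne_zero hm)) ht]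
    _ ≤ F ^ (j + 1) * (j.factorial : ℝ) ^ (n / m : ℝ) * max B 1 := by
        gcongr
        exacts [Nat.div_le_self j m, factorial_pow_le_factorial_rpow_div hm (Nat.mul_div_le j m) n]
    _ = F * (F ^ j * (j.factorial : ℝ) ^ (n / m : ℝ)) * max B 1 := by ring
    _ ≤ F * (A * θ ^ j * (j.factorial : ℝ) ^ δ) * max B 1 := by
        gcongr F * ?_ * max B 1
        exact hA j
    _ = F * A * max B 1 * θ ^ j * (j.factorial : ℝ) ^ δ := by ring

end GevreyEstimate

section FourierInversion

variable {E : Type*} [NormedAddCommGroup E]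

lemma isBigO_abs_rpow_neg_one_add_norm_rpow_neg {s : ℝ} (hs : 0 ≤ s) :
    (fun ξ : ℝ => |ξ| ^ (-s)) =O[cocompact ℝ] fun ξ => (1 + ‖ξ‖) ^ (-s) := by
  refine IsBigO.of_bound (2 ^ s) ?_
  filter_upwards [(tendsto_norm_cocompact_atTop (E := ℝ)).eventually_ge_atTop 1] with ξ hξ
  rw [Real.norm_of_nonneg (by positivity), Real.norm_of_nonneg (by positivity)]
  calc |ξ| ^ (-s) ≤ ((1 + ‖ξ‖) / 2) ^ (-s) :=
        Real.rpow_le_rpow_of_nonpos (by positivity) (by rw [← Real.norm_eq_abs]; linarith)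
          (neg_nonpos.2 hs)
    _ = 2 ^ s * (1 + ‖ξ‖) ^ (-s) := by
        rw [Real.div_rpow (by positivity) zero_le_two, Real.rpow_neg zero_le_two, div_inv_eq_mul,
          mul_comm]

lemma integrable_norm_pow_mul_norm_of_isBigO {Φ : ℝ → E} (hΦ : Continuous Φ) {r : ℝ}
    (hO : Φ =O[cocompact ℝ] fun ξ => |ξ| ^ (-r)) {k : ℕ} (hk : k + 1 < r) :
    Integrable fun ξ => ‖ξ‖ ^ k * ‖Φ ξ‖ := by
  have hloc : LocallyIntegrable fun ξ => ‖ξ‖ ^ k * ‖Φ ξ‖ :=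
    Continuous.locallyIntegrable (by fun_prop)
  have hpow : (fun ξ => ‖ξ‖ ^ k * ‖Φ ξ‖) =O[cocompact ℝ] fun ξ => |ξ| ^ (-(r - k)) := by
    refine ((isBigO_refl (fun ξ : ℝ => ‖ξ‖ ^ k) _).mul hO.norm_left).congr' .rfl ?_
    filter_upwards [(isCompact_singleton (x := (0 : ℝ))).compl_mem_cocompact] with ξ hξ
    rw [neg_sub, sub_eq_add_neg, Real.rpow_add (abs_pos.2 hξ), Real.rpow_natCast,
      Real.norm_eq_abs]
  have hint : Integrable fun ξ : ℝ => (1 + ‖ξ‖) ^ (-(r - k)) :=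
    integrable_one_add_norm (by rw [Module.finrank_self, Nat.cast_one]; linarith)
  exact hloc.integrable_of_isBigO_cocompact
    (hpow.trans (isBigO_abs_rpow_neg_one_add_norm_rpow_neg (by linarith)))
    (hint.integrableAtFilter _)

lemma isBigO_abs_rpow_neg_of_isBoundedUnder {Φ : ℝ → E} {α : ℝ}
    (hbdd : IsBoundedUnder (· ≤ ·) (atBot ⊔ atTop) fun β : ℝ => |β| ^ α * ‖Φ β‖) :
    Φ =O[cocompact ℝ] fun β => |β| ^ (-α) := by
  obtain ⟨c, hc⟩ := hbdd
  rw [eventually_map, ← cocompact_eq_atBot_atTop] at hc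
  refine IsBigO.of_bound c ?_
  filter_upwards [hc, (isCompact_singleton (x := (0 : ℝ))).compl_mem_cocompact] with β hβ hβ0
  have hpos : 0 < |β| ^ α := Real.rpow_pos_of_pos (abs_pos.2 hβ0) α
  rw [Real.rpow_neg (abs_nonneg β), norm_inv, Real.norm_of_nonneg hpos.le, ← div_eq_mul_inv,
    le_div_iff₀' hpos]
  exact hβ

lemma isBigO_comp_const_mul_abs_rpow {Φ : ℝ → E} {r c : ℝ} (hc : c ≠ 0)
    (hO : Φ =O[cocompact ℝ] fun ξ => |ξ| ^ r) :
    (fun ξ => Φ (c * ξ)) =O[cocompact ℝ] fun ξ => |ξ| ^ r := by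
  refine (hO.comp_tendsto (tendsto_cocompact_mul_left₀ hc)).trans ?_
  simp only [Function.comp_def, abs_mul, Real.mul_rpow (abs_nonneg _) (abs_nonneg _)]
  exact isBigO_const_mul_self _ _ _

lemma isBigO_pow_abs_rpow {R : Type*} [SeminormedRing R] {Φ : ℝ → R} {l : Filter ℝ} {r : ℝ}
    (hO : Φ =O[l] fun ξ => |ξ| ^ r) (n : ℕ) :
    (fun ξ => Φ ξ ^ n) =O[l] fun ξ => |ξ| ^ (r * n) := by
  simpa only [Real.rpow_mul (abs_nonneg _), Real.rpow_natCast] using hO.pow n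

variable [NormedSpace ℂ E]

lemma contDiff_fourierInv_of_isBigO {Φ : ℝ → E} (hΦ : Continuous Φ) {r : ℝ}
    (hO : Φ =O[cocompact ℝ] fun ξ => |ξ| ^ (-r)) {m : ℕ} (hm : m + 1 < r) :
    ContDiff ℝ m (𝓕⁻ Φ) := by
  rw [Real.fourierInv_eq_fourier_comp_neg]
  refine Real.contDiff_fourier (N := (m : ℕ∞)) fun k hk => ?_
  have hkm : (k : ℝ) + 1 < r := lt_of_le_of_lt (by gcongr; exact_mod_cast hk) hm
  simpa only [norm_neg] using (integrable_norm_pow_mul_norm_of_isBigO hΦ hO hkm).comp_neg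

variable {X : Type*} [NormedAddCommGroup X] [NormedSpace ℂ X]

lemma fourierInv_clm_apply {Φ : ℝ → X →L[ℂ] E} (hΦ : Integrable Φ) (t : ℝ) (x : X) :
    𝓕⁻ Φ t x = 𝓕⁻ (fun ξ => Φ ξ x) t := by
  have hint : Integrable fun ξ => Real.fourierChar (inner ℝ ξ t) • Φ ξ := by
    simpa only [inner_neg_right, neg_neg] using (Real.fourierIntegral_convergent_iff (-t)).2 hΦ
  simp only [Real.fourierInv_eq]
  exact ContinuousLinearMap.integral_apply hint x

lemma eq_fourierInv_of_forall_fourier_apply_eq [CompleteSpace E] {f Φ : ℝ → X →L[ℂ] E}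
    (hcont : ∀ x, Continuous fun t => f t x) (hint : ∀ x, Integrable fun t => f t x)
    (hΦ : Integrable Φ) (hf : ∀ x, 𝓕 (fun t => f t x) = fun ξ => Φ ξ x) : f = 𝓕⁻ Φ := by
  ext t x
  have hFint : Integrable (𝓕 fun t => f t x) := by
    rw [hf]
    exact (ContinuousLinearMap.apply ℂ E x).integrable_comp hΦ
  rw [fourierInv_clm_apply hΦ, ← hf x, (hcont x).fourierInv_fourier_eq (hint x) hFint]

end FourierInversion

section Semigroup

variable {X : Type*} [NormedAddCommGroup X] [NormedSpace ℂ X]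

/-- `S` is a strongly continuous one-parameter semigroup of bounded operators satisfying the
growth bound `‖S t‖ ≤ M * exp (ω * t)`. Only the values `S t` with `0 ≤ t` are constrained. -/
structure IsExpBoundedSemigroup (S : ℝ → X →L[ℂ] X) (M ω : ℝ) : Prop where
  map_zero : S 0 = ContinuousLinearMap.id ℂ X
  map_add : ∀ t s, 0 ≤ t → 0 ≤ s → S (t + s) = (S t).comp (S s)
  continuousOn_apply : ∀ x, ContinuousOn (fun t => S t x) (Ici 0)
  norm_le : ∀ t, 0 ≤ t → ‖S t‖ ≤ M * Real.exp (ω * t)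

/-- The pair `(x, y)` belongs to the graph of the infinitesimal generator of `S`, that is, `x` is
in its domain and is mapped to `y`. -/
def InGeneratorGraph (S : ℝ → X →L[ℂ] X) (x y : X) : Prop :=
  Tendsto (fun h : ℝ => h⁻¹ • (S h x - x)) (𝓝[>] 0) (𝓝 y)

/-- The integrand `tⁿ e^{-zt} S(t)x` of the `n`-th derivative (up to sign) of the Laplace transform
of the orbit `t ↦ S t x`. -/
noncomputable def laplaceIntegrand (S : ℝ → X →L[ℂ] X) (n : ℕ) (z : ℂ) (x : X) (t : ℝ) : X :=
  ((t : ℂ) ^ n * Complex.exp (-(z * t))) • S t x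

lemma norm_cexp_neg_mul_ofReal (z : ℂ) (t : ℝ) :
    ‖Complex.exp (-(z * t))‖ = Real.exp (-(z.re * t)) := by
  simp [Complex.norm_exp]

lemma laplaceIntegrand_add (S : ℝ → X →L[ℂ] X) (n : ℕ) (z : ℂ) (x y : X) (t : ℝ) :
    laplaceIntegrand S n z (x + y) t = laplaceIntegrand S n z x t + laplaceIntegrand S n z y t := by
  simp only [laplaceIntegrand, _root_.map_add, smul_add]

lemma laplaceIntegrand_smul (S : ℝ → X →L[ℂ] X) (n : ℕ) (z c : ℂ) (x : X) (t : ℝ) :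
    laplaceIntegrand S n z (c • x) t = c • laplaceIntegrand S n z x t := by
  simp only [laplaceIntegrand, _root_.map_smul, smul_comm c]

lemma exp_neg_smul_indicator_apply (S : ℝ → X →L[ℂ] X) (n : ℕ) (σ t : ℝ) (x : X) :
    (Real.exp (-(σ * t)) • (Ioi 0).indicator (fun t => t ^ n • S t) t) x =
      (Ioi 0).indicator (laplaceIntegrand S n σ x) t := by
  by_cases ht : t ∈ Ioi 0
  · rw [indicator_of_mem ht, indicator_of_mem ht, laplaceIntegrand, smul_smul]
    norm_cast
    rw [mul_comm, ← Complex.coe_smul]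
    rfl
  · rw [indicator_of_notMem ht, indicator_of_notMem ht, smul_zero, zero_apply]

lemma integral_Ioi_eq_neg_of_hasDerivWithinAt {E : Type*} [NormedAddCommGroup E]
    [NormedSpace ℝ E] [CompleteSpace E] {f f' : ℝ → E} {a : ℝ}
    (hderiv : ∀ t ∈ Ici a, HasDerivWithinAt f (f' t) (Ici a) t)
    (hf' : IntegrableOn f' (Ioi a)) (hf : IntegrableOn f (Ioi a)) :
    ∫ t in Ioi a, f' t = -f a := by
  have hderivAt : ∀ t ∈ Ioi a, HasDerivAt f (f' t) t := fun t ht =>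
    (hderiv t (mem_Ioi.1 ht).le).hasDerivAt (Ici_mem_nhds ht)
  rw [integral_Ioi_of_hasDerivAt_of_tendsto (hderiv a self_mem_Ici).continuousWithinAt hderivAt hf'
    (tendsto_zero_of_hasDerivAt_of_integrableOn_Ioi hderivAt hf' hf), zero_sub]

namespace IsExpBoundedSemigroup

variable {S : ℝ → X →L[ℂ] X} {M ω : ℝ} {z w : ℂ}

lemma continuousOn_laplaceIntegrand (h : IsExpBoundedSemigroup S M ω) (n : ℕ) (z : ℂ) (x : X) :
    ContinuousOn (laplaceIntegrand S n z x) (Ici 0) :=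
  ContinuousOn.smul (by fun_prop) (h.continuousOn_apply x)

lemma norm_laplaceIntegrand_le (h : IsExpBoundedSemigroup S M ω) (n : ℕ) (z : ℂ) (x : X) {t : ℝ}
    (ht : 0 ≤ t) : ‖laplaceIntegrand S n z x t‖ ≤
      t ^ n * Real.exp ((ω - z.re) * t) * (M * ‖x‖) := by
  calc ‖laplaceIntegrand S n z x t‖ = t ^ n * Real.exp (-(z.re * t)) * ‖S t x‖ := by
        rw [laplaceIntegrand, norm_smul, norm_mul, norm_pow, Complex.norm_real,
          Real.norm_of_nonneg ht, norm_cexp_neg_mul_ofReal]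
    _ ≤ t ^ n * Real.exp (-(z.re * t)) * (M * Real.exp (ω * t) * ‖x‖) := by
        gcongr
        exact (S t).le_of_opNorm_le (h.norm_le t ht) x
    _ = t ^ n * Real.exp ((ω - z.re) * t) * (M * ‖x‖) := by
        rw [sub_mul, sub_eq_add_neg, Real.exp_add]
        ring

lemma integrableOn_laplaceIntegrand (h : IsExpBoundedSemigroup S M ω) (n : ℕ) (hz : ω < z.re)
    (x : X) : IntegrableOn (laplaceIntegrand S n z x) (Ioi 0) := by
  have hpow : IntegrableOn (fun t : ℝ => t ^ n * Real.exp ((ω - z.re) * t)) (Ioi 0) := by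
    simpa only [Real.rpow_natCast, Real.rpow_one, neg_sub] using
      integrableOn_rpow_mul_exp_neg_mul_rpow (s := n) (p := 1) (b := z.re - ω)
        (by linarith [n.cast_nonneg (α := ℝ)]) one_pos (sub_pos.2 hz)
  refine (hpow.mul_const (M * ‖x‖)).mono' ((h.continuousOn_laplaceIntegrand n z x).mono
    Ioi_subset_Ici_self |>.aestronglyMeasurable measurableSet_Ioi) ?_
  exact ae_restrict_of_forall_mem measurableSet_Ioi fun t ht =>
    h.norm_laplaceIntegrand_le n z x (mem_Ioi.1 ht).le

lemma norm_integral_laplaceIntegrand_le (h : IsExpBoundedSemigroup S M ω) (hz : ω < z.re) (x : X) :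
    ‖∫ t in Ioi 0, laplaceIntegrand S 0 z x t‖ ≤ M / (z.re - ω) * ‖x‖ := by
  have hneg : ω - z.re < 0 := sub_neg.2 hz
  calc ‖∫ t in Ioi 0, laplaceIntegrand S 0 z x t‖
      ≤ ∫ t in Ioi 0, Real.exp ((ω - z.re) * t) * (M * ‖x‖) :=
        norm_integral_le_of_norm_le ((integrableOn_exp_mul_Ioi hneg 0).mul_const _) <|
          ae_restrict_of_forall_mem measurableSet_Ioi fun t ht => by
            simpa only [pow_zero, one_mul] using
              h.norm_laplaceIntegrand_le 0 z x (mem_Ioi.1 ht).le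
    _ = M / (z.re - ω) * ‖x‖ := by
        rw [integral_mul_const, integral_exp_mul_Ioi hneg, mul_zero, Real.exp_zero,
          ← neg_sub z.re ω, neg_div_neg_eq]
        ring

/-- The resolvent `R(z) = ∫₀^∞ e^{-zt} S(t) dt` of the generator of `S`, for `ω < re z`; it takes
the junk value `0` on the complementary half-plane. -/
noncomputable def resolvent (h : IsExpBoundedSemigroup S M ω) (z : ℂ) : X →L[ℂ] X :=
  if hz : ω < z.re then
    LinearMap.mkContinuous
      { toFun := fun x => ∫ t in Ioi 0, laplaceIntegrand S 0 z x t
        map_add' := fun x y => by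
          simp only [laplaceIntegrand_add]
          exact integral_add (h.integrableOn_laplaceIntegrand 0 hz x)
            (h.integrableOn_laplaceIntegrand 0 hz y)
        map_smul' := fun c x => by
          simp only [laplaceIntegrand_smul, integral_smul, RingHom.id_apply] }
      (M / (z.re - ω)) fun x => h.norm_integral_laplaceIntegrand_le hz x
  else 0

lemma resolvent_apply (h : IsExpBoundedSemigroup S M ω) (hz : ω < z.re) (x : X) :
    h.resolvent z x = ∫ t in Ioi 0, laplaceIntegrand S 0 z x t := by
  rw [resolvent, dif_pos hz]
  rfl

lemma bound_nonneg (h : IsExpBoundedSemigroup S M ω) : 0 ≤ M := by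
  simpa using (norm_nonneg _).trans (h.norm_le 0 le_rfl)

lemma norm_resolvent_le (h : IsExpBoundedSemigroup S M ω) (hz : ω < z.re) :
    ‖h.resolvent z‖ ≤ M / (z.re - ω) :=
  ContinuousLinearMap.opNorm_le_bound _ (div_nonneg h.bound_nonneg (sub_pos.2 hz).le) fun x => by
    rw [h.resolvent_apply hz]
    exact h.norm_integral_laplaceIntegrand_le hz x

lemma continuous_indicator_laplaceIntegrand (h : IsExpBoundedSemigroup S M ω) {n : ℕ} (hn : n ≠ 0)
    (z : ℂ) (x : X) : Continuous ((Ioi 0).indicator (laplaceIntegrand S n z x)) := by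
  have hmax : (Ioi 0).indicator (laplaceIntegrand S n z x) =
      fun t => laplaceIntegrand S n z x (max t 0) := by
    ext t
    rcases le_or_gt t 0 with ht | ht
    · simp [ht, laplaceIntegrand, hn]
    · simp [ht, ht.le]
  rw [hmax]
  exact (h.continuousOn_laplaceIntegrand n z x).comp_continuous (by fun_prop)
    fun t => le_max_right t 0

variable [CompleteSpace X]

lemma laplaceIntegrand_resolvent (h : IsExpBoundedSemigroup S M ω) (hz : ω < z.re) (x : X) {t : ℝ}
    (ht : 0 ≤ t) : laplaceIntegrand S 0 z (h.resolvent z x) t =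
      h.resolvent z x - ∫ s in (0 : ℝ)..t, laplaceIntegrand S 0 z x s := by
  have hint := h.integrableOn_laplaceIntegrand 0 hz x
  have hsub : h.resolvent z x - ∫ s in (0 : ℝ)..t, laplaceIntegrand S 0 z x s =
      ∫ s in Ioi t, laplaceIntegrand S 0 z x s := by
    rw [h.resolvent_apply hz, sub_eq_iff_eq_add', intervalIntegral.integral_interval_add_Ioi hint
      (hint.mono_set (Ioi_subset_Ioi ht))]
  have hshift : ∫ s in Ioi 0, laplaceIntegrand S 0 z x (s + t) =
      ∫ s in Ioi t, laplaceIntegrand S 0 z x s := by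
    simpa using (measurePreserving_add_right volume t).setIntegral_preimage_emb
      (measurableEmbedding_addRight t) (laplaceIntegrand S 0 z x) (Ioi t)
  rw [hsub, ← hshift, laplaceIntegrand, h.resolvent_apply hz,
    ← ContinuousLinearMap.integral_comp_comm (S t) hint, ← integral_smul]
  refine setIntegral_congr_fun measurableSet_Ioi fun s hs => ?_
  have hexp : Complex.exp (-(z * t)) * Complex.exp (-(z * s)) =
      Complex.exp (-(z * (s + t : ℝ))) := by
    rw [← Complex.exp_add]
    push_cast
    ring_nf
  simp only [laplaceIntegrand, pow_zero, one_mul, _root_.map_smul, smul_smul, hexp, add_comm s t,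
    h.map_add t s ht (mem_Ioi.1 hs).le, ContinuousLinearMap.comp_apply]

lemma hasDerivWithinAt_laplaceIntegrand_resolvent_self (h : IsExpBoundedSemigroup S M ω)
    (hz : ω < z.re) (x : X) {t : ℝ} (ht : t ∈ Ici 0) :
    HasDerivWithinAt (laplaceIntegrand S 0 z (h.resolvent z x)) (-laplaceIntegrand S 0 z x t)
      (Ici 0) t := by
  set g : ℝ → X := fun s => laplaceIntegrand S 0 z x (max s 0)
  have hg : Continuous g := (h.continuousOn_laplaceIntegrand 0 z x).comp_continuous
    (by fun_prop) fun s => le_max_right s 0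
  have hgt {s : ℝ} (hs : 0 ≤ s) : g s = laplaceIntegrand S 0 z x s := by
    simp only [g, max_eq_left hs]
  have heq {s : ℝ} (hs : s ∈ Ici 0) : laplaceIntegrand S 0 z (h.resolvent z x) s =
      h.resolvent z x - ∫ u in (0 : ℝ)..s, g u := by
    rw [h.laplaceIntegrand_resolvent hz x hs, intervalIntegral.integral_congr fun u hu => ?_]
    rw [uIcc_of_le hs] at hu
    exact (hgt hu.1).symm
  rw [← hgt ht]
  exact (((hg.integral_hasStrictDerivAt 0 t).hasDerivAt.const_sub _).hasDerivWithinAt).congr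
    (fun s hs => heq hs) (heq ht)

lemma hasDerivWithinAt_apply_resolvent (h : IsExpBoundedSemigroup S M ω) (hw : ω < w.re) (x : X)
    {t : ℝ} (ht : t ∈ Ici 0) :
    HasDerivWithinAt (fun s => S s (h.resolvent w x)) (S t (w • h.resolvent w x - x))
      (Ici 0) t := by
  have hexp : HasDerivAt (fun s : ℝ => Complex.exp (w * s)) (Complex.exp (w * t) * w) t := by
    simpa using ((Complex.ofRealCLM.hasDerivAt (x := t)).const_mul w).cexp
  have hS {y : X} (s : ℝ) : Complex.exp (w * s) • laplaceIntegrand S 0 w y s = S s y := by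
    simp [laplaceIntegrand, smul_smul, ← Complex.exp_add]
  have hderiv := hexp.hasDerivWithinAt.fun_smul
    (h.hasDerivWithinAt_laplaceIntegrand_resolvent_self hw x ht)
  simp only [hS] at hderiv
  convert hderiv using 1
  rw [smul_neg, hS, mul_comm, mul_smul, hS, _root_.map_sub, _root_.map_smul]
  abel

lemma inGeneratorGraph_resolvent (h : IsExpBoundedSemigroup S M ω) (hw : ω < w.re) (x : X) :
    InGeneratorGraph S (h.resolvent w x) (w • h.resolvent w x - x) := by
  have hderiv := (h.hasDerivWithinAt_apply_resolvent hw x self_mem_Ici).Ioi_of_Ici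
  rw [hasDerivWithinAt_iff_tendsto_slope' self_notMem_Ioi] at hderiv
  simpa [InGeneratorGraph, slope_fun_def, h.map_zero] using hderiv

lemma hasDerivWithinAt_laplaceIntegrand_resolvent (h : IsExpBoundedSemigroup S M ω)
    (hw : ω < w.re) (n : ℕ) (z : ℂ) (x : X) {t : ℝ} (ht : t ∈ Ici 0) :
    HasDerivWithinAt (laplaceIntegrand S n z (h.resolvent w x))
      ((n : ℂ) • laplaceIntegrand S (n - 1) z (h.resolvent w x) t +
        laplaceIntegrand S n z ((w - z) • h.resolvent w x - x) t) (Ici 0) t := by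
  have hofReal := Complex.ofRealCLM.hasDerivAt (x := t)
  have hweight : HasDerivAt (fun s : ℝ => (s : ℂ) ^ n * Complex.exp (-(z * s)))
      (n * (t : ℂ) ^ (n - 1) * Complex.exp (-(z * t)) +
        (t : ℂ) ^ n * (Complex.exp (-(z * t)) * -z)) t := by
    simpa using (hofReal.fun_pow n).fun_mul (hofReal.const_mul z).fun_neg.cexp
  refine (hweight.hasDerivWithinAt.fun_smul
    (h.hasDerivWithinAt_apply_resolvent hw x ht)).congr_deriv ?_
  simp only [laplaceIntegrand, _root_.map_sub, _root_.map_smul]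
  module

lemma integral_laplaceIntegrand_resolvent (h : IsExpBoundedSemigroup S M ω) (hz : ω < z.re)
    (hw : ω < w.re) (n : ℕ) (x : X) :
    (n : ℂ) • (∫ t in Ioi 0, laplaceIntegrand S (n - 1) z (h.resolvent w x) t) +
      (∫ t in Ioi 0, laplaceIntegrand S n z ((w - z) • h.resolvent w x - x) t) =
      -((0 : ℂ) ^ n • h.resolvent w x) := by
  have hint (k : ℕ) (y : X) := h.integrableOn_laplaceIntegrand k hz y
  have hsmul : IntegrableOn (fun t => (n : ℂ) •
      laplaceIntegrand S (n - 1) z (h.resolvent w x) t) (Ioi 0) := (hint _ _).smul _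
  rw [← integral_smul, ← integral_add hsmul (hint n _), integral_Ioi_eq_neg_of_hasDerivWithinAt
      (fun t ht => h.hasDerivWithinAt_laplaceIntegrand_resolvent hw n z x ht)
      (hsmul.add (hint n _)) (hint n _)]
  simp [laplaceIntegrand, h.map_zero]

lemma resolvent_sub_resolvent (h : IsExpBoundedSemigroup S M ω) (hz : ω < z.re)
    (hw : ω < w.re) :
    h.resolvent z - h.resolvent w = (w - z) • (h.resolvent z * h.resolvent w) := by
  ext x
  have hzero := h.integral_laplaceIntegrand_resolvent hz hw 0 x
  rw [← h.resolvent_apply hz ((w - z) • h.resolvent w x - x), Nat.cast_zero, zero_smul, zero_add,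
    pow_zero, one_smul, _root_.map_sub, _root_.map_smul, sub_eq_iff_eq_add] at hzero
  exact (sub_eq_neg_add _ _).trans hzero.symm

lemma continuousOn_resolvent (h : IsExpBoundedSemigroup S M ω) :
    ContinuousOn h.resolvent {z | ω < z.re} := by
  intro w hw
  refine tendsto_iff_norm_sub_tendsto_zero.2 <| squeeze_zero' (.of_forall fun _ => norm_nonneg _)
    (g := fun z => ‖w - z‖ * (M / (z.re - ω) * (M / (w.re - ω)))) ?_ ?_
  · filter_upwards [self_mem_nhdsWithin] with z hz
    rw [h.resolvent_sub_resolvent hz hw, norm_smul]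
    gcongr
    exact norm_mul_le_of_le (h.norm_resolvent_le hz) (h.norm_resolvent_le hw)
  · have hcont : ContinuousAt (fun z : ℂ => ‖w - z‖ * (M / (z.re - ω) * (M / (w.re - ω)))) w :=
      ContinuousAt.mul (by fun_prop) <| ContinuousAt.mul
        (continuousAt_const.div (by fun_prop) (sub_pos.2 hw).ne') continuousAt_const
    simpa using hcont.continuousWithinAt.tendsto

lemma integral_laplaceIntegrand_eq_factorial_smul (h : IsExpBoundedSemigroup S M ω)
    (hz : ω < z.re) (n : ℕ) (x : X) :
    ∫ t in Ioi 0, laplaceIntegrand S n z x t =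
      (n.factorial : ℂ) • (h.resolvent z ^ (n + 1)) x := by
  induction n generalizing x with
  | zero => simp [h.resolvent_apply hz]
  | succ n ih =>
    have hrec := h.integral_laplaceIntegrand_resolvent hz hz (n + 1) x
    have hneg : ∫ t in Ioi 0, laplaceIntegrand S (n + 1) z (-x) t =
        -∫ t in Ioi 0, laplaceIntegrand S (n + 1) z x t := by
      simp only [laplaceIntegrand, _root_.map_neg, smul_neg, integral_neg]
    simp only [Nat.add_sub_cancel, sub_self, zero_smul, zero_sub, hneg, ih, ne_eq,
      Nat.succ_ne_zero, not_false_eq_true, zero_pow, neg_zero, add_neg_eq_zero] at hrec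
    rw [← hrec, smul_smul, Nat.factorial_succ, pow_succ _ (n + 1), Nat.cast_mul]
    rfl

lemma fourier_indicator_laplaceIntegrand (h : IsExpBoundedSemigroup S M ω) {σ : ℝ} (hσ : ω < σ)
    (n : ℕ) (x : X) : 𝓕 ((Ioi 0).indicator (laplaceIntegrand S n σ x)) = fun ξ =>
      ((n.factorial : ℂ) • h.resolvent (σ + Complex.I * (2 * Real.pi * ξ : ℝ)) ^ (n + 1)) x := by
  ext ξ
  have hre : ω < (σ + Complex.I * (2 * Real.pi * ξ : ℝ)).re := by simpa using hσ
  rw [smul_apply, ← h.integral_laplaceIntegrand_eq_factorial_smul hre,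
    Real.fourier_real_eq_integral_exp_smul, ← indicator_smul, integral_indicator measurableSet_Ioi]
  congr 1 with t
  rw [laplaceIntegrand, laplaceIntegrand, smul_smul, mul_left_comm, ← Complex.exp_add]
  push_cast
  ring_nf

lemma exp_neg_smul_indicator_eq_fourierInv (h : IsExpBoundedSemigroup S M ω) {σ : ℝ}
    (hσ : ω < σ) {n : ℕ} (hn : n ≠ 0)
    (hint : Integrable fun ξ : ℝ =>
      (n.factorial : ℂ) • h.resolvent (σ + Complex.I * (2 * Real.pi * ξ : ℝ)) ^ (n + 1)) :
    (fun t => Real.exp (-(σ * t)) • (Ioi 0).indicator (fun t => t ^ n • S t) t) =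
      𝓕⁻ fun ξ : ℝ =>
        (n.factorial : ℂ) • h.resolvent (σ + Complex.I * (2 * Real.pi * ξ : ℝ)) ^ (n + 1) := by
  refine eq_fourierInv_of_forall_fourier_apply_eq (fun x => ?_) (fun x => ?_) hint fun x => ?_ <;>
    simp only [exp_neg_smul_indicator_apply]
  · exact h.continuous_indicator_laplaceIntegrand hn σ x
  · exact (integrable_indicator_iff measurableSet_Ioi).2 (h.integrableOn_laplaceIntegrand n hσ x)
  · exact h.fourier_indicator_laplaceIntegrand hσ n x

lemma contDiff_indicator_pow_smul_of_isBigO_resolvent (h : IsExpBoundedSemigroup S M ω)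
    {σ α : ℝ} (hσ : ω < σ)
    (hO : (fun β : ℝ => h.resolvent (σ + Complex.I * β)) =O[cocompact ℝ] fun β => |β| ^ (-α))
    {m n : ℕ} (hn : n ≠ 0) (hmn : m + 1 < α * (n + 1)) :
    ContDiff ℝ m ((Ioi 0).indicator fun t => t ^ n • S t) := by
  set Φ : ℝ → X →L[ℂ] X := fun ξ =>
    (n.factorial : ℂ) • h.resolvent (σ + Complex.I * (2 * Real.pi * ξ : ℝ)) ^ (n + 1)
  have hΦ : Continuous Φ := by
    have hcont : Continuous fun ξ : ℝ => h.resolvent (σ + Complex.I * (2 * Real.pi * ξ : ℝ)) :=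
      h.continuousOn_resolvent.comp_continuous (by fun_prop) fun ξ => by simpa using hσ
    exact (hcont.pow (n + 1)).const_smul (n.factorial : ℂ)
  have hΦO : Φ =O[cocompact ℝ] fun ξ => |ξ| ^ (-(α * (n + 1))) := by
    have hpow := isBigO_pow_abs_rpow
      (isBigO_comp_const_mul_abs_rpow Real.two_pi_pos.ne' hO) (n + 1)
    rw [Nat.cast_succ, neg_mul] at hpow
    exact hpow.const_smul_left (n.factorial : ℂ)
  have hΦint : Integrable Φ := by
    have hnorm := integrable_norm_pow_mul_norm_of_isBigO hΦ hΦO (k := 0)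
      (by push_cast; linarith [m.cast_nonneg (α := ℝ)])
    simp only [pow_zero, one_mul] at hnorm
    exact (integrable_norm_iff hΦ.aestronglyMeasurable).1 hnorm
  have heq : ((Ioi 0).indicator fun t => t ^ n • S t) =
      fun t => Real.exp (σ * t) • 𝓕⁻ Φ t := by
    ext1 t
    rw [← h.exp_neg_smul_indicator_eq_fourierInv hσ hn hΦint, smul_smul, ← Real.exp_add,
      add_neg_cancel, Real.exp_zero, one_smul]
  have hexp : ContDiff ℝ m fun t : ℝ => Real.exp (σ * t) := by fun_prop
  rw [heq]
  exact hexp.smul (contDiff_fourierInv_of_isBigO hΦ hΦO hmn)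

lemma norm_resolvent_le_of_left_inverse (h : IsExpBoundedSemigroup S M ω) (hz : ω < z.re)
    {R : X →L[ℂ] X} (hR : ∀ x y, InGeneratorGraph S x y → R (w • x - y) = x) :
    ‖h.resolvent z‖ ≤ ‖R‖ * (1 + ‖w - z‖ * (M / (z.re - ω))) := by
  refine ContinuousLinearMap.opNorm_le_bound _ ?_ fun x => ?_
  · have := div_nonneg h.bound_nonneg (sub_pos.2 hz).le
    positivity
  have hx : w • h.resolvent z x - (z • h.resolvent z x - x) = x + (w - z) • h.resolvent z x := by
    module
  rw [← hR _ _ (h.inGeneratorGraph_resolvent hz x), hx, mul_assoc]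
  refine R.le_opNorm_of_le ?_
  calc ‖x + (w - z) • h.resolvent z x‖ ≤ ‖x‖ + ‖w - z‖ * (M / (z.re - ω) * ‖x‖) := by
        refine (norm_add_le _ _).trans ?_
        rw [norm_smul]
        gcongr
        exact (h.resolvent z).le_of_opNorm_le (h.norm_resolvent_le hz) x
    _ = (1 + ‖w - z‖ * (M / (z.re - ω))) * ‖x‖ := by ring

lemma exists_contDiff_indicator_pow_smul (h : IsExpBoundedSemigroup S M ω) {σ α : ℝ}
    (hσ : ω < σ) (hα : 0 < α)
    (hO : (fun β : ℝ => h.resolvent (σ + Complex.I * β)) =O[cocompact ℝ] fun β => |β| ^ (-α))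
    (m : ℕ) : ∃ n : ℕ, n ≤ (m + 1) / α + 1 ∧
      ContDiff ℝ m ((Ioi 0).indicator fun t => t ^ n • S t) := by
  refine ⟨⌊(m + 1) / α⌋₊ + 1, ?_,
    h.contDiff_indicator_pow_smul_of_isBigO_resolvent hσ hO (Nat.succ_ne_zero _) ?_⟩ <;>
    push_cast
  · gcongr
    exact Nat.floor_le (by positivity)
  · rw [← div_lt_iff₀' hα]
    linarith [Nat.lt_floor_add_one ((m + 1) / α)]

theorem isGevreyClass_of_isBigO_resolvent (h : IsExpBoundedSemigroup S M ω) {σ α δ : ℝ}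
    (hσ : ω < σ) (hα : 0 < α)
    (hO : (fun β : ℝ => h.resolvent (σ + Complex.I * β)) =O[cocompact ℝ] fun β => |β| ^ (-α))
    (hδ : 1 / α < δ) : IsGevreyClass S δ 0 := by
  have hsmooth : ContDiffOn ℝ (⊤ : ℕ∞) S (Ioi 0) := contDiffOn_infty.2 fun m =>
    let ⟨_, _, hn⟩ := h.exists_contDiff_indicator_pow_smul hσ hα hO m
    contDiffOn_of_indicator_pow_smul hn
  have hgap : 0 < δ - 1 / α := sub_pos.2 hδ
  obtain ⟨m, hm⟩ := exists_nat_gt ((1 / α + 1) / (δ - 1 / α))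
  obtain ⟨n, hn, hsmul⟩ := h.exists_contDiff_indicator_pow_smul hσ hα hO m
  have hnm : n < δ * m := by
    rw [div_lt_iff₀ hgap] at hm
    calc (n : ℝ) ≤ (m + 1) / α + 1 := hn
      _ < δ * m := by rw [add_div, ← one_div_mul_eq_div α (m : ℝ)]; linarith
  obtain ⟨C, hC⟩ := exists_norm_iteratedDeriv_le_inv_pow hsmul 1
  refine ⟨hsmooth, fun K hpos hK θ hθ => ?_⟩
  obtain ⟨B, hB, hbound⟩ := exists_norm_iteratedDeriv_le_factorial_rpow hsmooth
    (fun t s ht hs => h.map_add t s ht.le hs.le) one_pos hC hnm hK hpos hθ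
  refine ⟨B, hB, fun t ht j => ?_⟩
  rw [iteratedDerivWithin_of_isOpen isOpen_Ioi (hpos ht)]
  exact hbound t ht j

lemma isBigO_resolvent_of_left_inverse (h : IsExpBoundedSemigroup S M ω) {μ σ : ℝ}
    (hσ : ω < σ) {R : ℝ → X →L[ℂ] X}
    (hR : ∀ β x y, InGeneratorGraph S x y → R β ((μ + Complex.I * β : ℂ) • x - y) = x) :
    (fun β : ℝ => h.resolvent (σ + Complex.I * β)) =O[⊤] R := by
  refine IsBigO.of_bound (1 + |μ - σ| * (M / (σ - ω))) (.of_forall fun β => ?_)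
  have hre : (σ + Complex.I * β : ℂ).re = σ := by simp
  have hle := h.norm_resolvent_le_of_left_inverse (hre.symm ▸ hσ) (hR β)
  rw [add_sub_add_right_eq_sub, ← Complex.ofReal_sub, Complex.norm_real, hre] at hle
  exact hle.trans_eq (mul_comm _ _)

end IsExpBoundedSemigroup

end Semigroup

theorem taylor_gevrey_criterion_general
    {X : Type*} [NormedAddCommGroup X] [NormedSpace ℂ X] [CompleteSpace X]
    {S : ℝ → X →L[ℂ] X} {M ω μ α δ : ℝ} (h : IsExpBoundedSemigroup S M ω) (hα : 0 < α)
    {R : ℝ → X →L[ℂ] X}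
    (hR : ∀ β x y, InGeneratorGraph S x y → R β ((μ + Complex.I * β : ℂ) • x - y) = x)
    (hbdd : IsBoundedUnder (· ≤ ·) (atBot ⊔ atTop) fun β : ℝ => |β| ^ α * ‖R β‖)
    (hδ : 1 / α < δ) : IsGevreyClass S δ 0 :=
  have hσ : ω < ω + 1 := lt_add_one ω
  h.isGevreyClass_of_isBigO_resolvent hσ hα
    (((h.isBigO_resolvent_of_left_inverse hσ hR).mono le_top).trans
      (isBigO_abs_rpow_neg_of_isBoundedUnder hbdd)) hδ

/-- Taylor's Gevrey criterion: if a strongly continuous semigroup `S`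
with `‖S(t)‖ ≤ M e^(ωt)` has generator `A` whose resolvent exists on the vertical line
`μ + iℝ` (for some `μ ≥ ω`) and satisfies
`limsup_{|β|→∞} |β|^α ‖R(μ+iβ;A)‖ = C < ∞` for some `α ∈ (0,1]`, then `S` is of
Gevrey class `δ` for `t > 0`, for every `δ > 1/α`. -/
theorem taylor_gevrey_criterion
    {X : Type*} [NormedAddCommGroup X] [NormedSpace ℂ X] [CompleteSpace X]
    (S : ℝ → X →L[ℂ] X)
    (hS0 : S 0 = ContinuousLinearMap.id ℂ X)
    (hSadd : ∀ t s : ℝ, 0 ≤ t → 0 ≤ s → S (t + s) = (S t).comp (S s))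
    (hScont : ∀ x : X, ContinuousOn (fun t => S t x) (Set.Ici (0 : ℝ)))
    (M ω : ℝ)
    (hbound : ∀ t : ℝ, 0 ≤ t → ‖S t‖ ≤ M * Real.exp (ω * t))
    (domA : Set X)
    (hdom : domA = {x : X | ∃ y : X,
      Filter.Tendsto (fun h : ℝ => h⁻¹ • (S h x - x))
        (nhdsWithin 0 (Set.Ioi 0)) (nhds y)})
    (A : X → X)
    (hA : ∀ x ∈ domA,
      Filter.Tendsto (fun h : ℝ => h⁻¹ • (S h x - x))
        (nhdsWithin 0 (Set.Ioi 0)) (nhds (A x)))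
    (μ α : ℝ) (hμ : ω ≤ μ) (hα : α ∈ Set.Ioc (0 : ℝ) 1)
    (R : ℝ → X →L[ℂ] X)
    (hR_left : ∀ β : ℝ, ∀ x ∈ domA,
      R β (((μ : ℂ) + Complex.I * (β : ℂ)) • x - A x) = x)
    (hR_right : ∀ β : ℝ, ∀ y : X,
      R β y ∈ domA ∧ ((μ : ℂ) + Complex.I * (β : ℂ)) • (R β y) - A (R β y) = y)
    (C : ℝ)
    (hbdd : Filter.IsBoundedUnder (· ≤ ·) (Filter.atBot ⊔ Filter.atTop)
      (fun β : ℝ => |β| ^ α * ‖R β‖))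
    (hlimsup : Filter.limsup (fun β : ℝ => |β| ^ α * ‖R β‖)
      (Filter.atBot ⊔ Filter.atTop) = C) :
    ∀ δ : ℝ, 1 / α < δ → IsGevreyClass S δ 0 := by
  have hR : ∀ β x y, InGeneratorGraph S x y → R β ((μ + Complex.I * β : ℂ) • x - y) = x := by
    intro β x y hxy
    have hx : x ∈ domA := hdom ▸ ⟨y, hxy⟩
    rw [← tendsto_nhds_unique (hA x hx) hxy, hR_left β x hx]
  exact fun δ hδ => taylor_gevrey_criterion_general ⟨hS0, hSadd, hScont, hbound⟩ hα.1 hR hbdd hδ
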